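/- arXiv:0707.0646 — 3 statements merged into one kernel-verified Lean document; each statement's English description precedes it below -/
import Mathlib

section
/- For every τ in the genus-2 Siegel upper half space H₂, the fourth powers of the ten even theta constants satisfy: θ⁴[δ₁] = P₀+P₁+P₂+P₃, θ⁴[δ₂] = P₀−P₁+P₂−P₃, θ⁴[δ₃] = P₀+P₁−P₂−P₃, θ⁴[δ₄] = P₀−P₁−P₂+P₃, θ⁴[δ₅] = 2P₁+2P₄, θ⁴[δ₆] = 2P₁−2P₄, θ⁴[δ₇] = 2P₂+2P₄, θ⁴[δ₈] = 2P₂−2P₄, θ⁴[δ₉] = 2P₃+2P₄, θ⁴[δ₁₀] = 2P₃−2P₄ (all evaluated at τ). -/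
open scoped BigOperators

namespace TwoLoop

/-- 2×2 complex matrices. -/
abbrev Mat2 := Matrix (Fin 2) (Fin 2) ℂ

/-- The genus-2 Siegel upper half space: symmetric 2×2 complex matrices with
positive definite imaginary part. -/
def SiegelH2 : Set Mat2 := {τ | τ.transpose = τ ∧ (τ.map Complex.im).PosDef}

/-- A (half-integer) theta characteristic `[a;b]`, recorded by its rows `a, b ∈ {0,1}²`. -/
abbrev Char := (Fin 2 → ℤ) × (Fin 2 → ℤ)

/-- The theta constant `θ[a;b](τ) = Σ_{n ∈ ℤ²} exp(πi (n+a/2)ᵀ τ (n+a/2) + πi (n+a/2)·b)`. -/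
noncomputable def theta (κ : Char) (τ : Mat2) : ℂ :=
  ∑' n : Fin 2 → ℤ,
    Complex.exp ((Real.pi : ℂ) * Complex.I *
      ((∑ i, ∑ j, ((n i : ℂ) + (κ.1 i : ℂ) / 2) * τ i j * ((n j : ℂ) + (κ.1 j : ℂ) / 2))
        + ∑ i, ((n i : ℂ) + (κ.1 i : ℂ) / 2) * (κ.2 i : ℂ)))

/-- The ten even characteristics δ₁,…,δ₁₀. -/
def δev : Fin 10 → Char :=
  ![(![0,0], ![0,0]), (![0,0], ![0,1]), (![0,0], ![1,0]), (![0,0], ![1,1]),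
    (![0,1], ![0,0]), (![0,1], ![1,0]), (![1,0], ![0,0]), (![1,0], ![0,1]),
    (![1,1], ![0,0]), (![1,1], ![1,1])]

/-- The six odd characteristics ν₁,…,ν₆. -/
def νodd : Fin 6 → Char :=
  ![(![0,1], ![0,1]), (![1,0], ![1,0]), (![0,1], ![1,1]),
    (![1,0], ![1,1]), (![1,1], ![0,1]), (![1,1], ![1,0])]

/-- `Θ[ε](τ) = θ[ε;0](2τ)`. -/
noncomputable def Θf (ε : Fin 2 → ℤ) (τ : Mat2) : ℂ := theta (ε, ![0,0]) ((2 : ℂ) • τ)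

noncomputable def P0 (τ : Mat2) : ℂ :=
  Θf ![0,0] τ ^ 4 + Θf ![0,1] τ ^ 4 + Θf ![1,0] τ ^ 4 + Θf ![1,1] τ ^ 4
noncomputable def P1 (τ : Mat2) : ℂ :=
  2 * (Θf ![0,0] τ ^ 2 * Θf ![0,1] τ ^ 2 + Θf ![1,0] τ ^ 2 * Θf ![1,1] τ ^ 2)
noncomputable def P2 (τ : Mat2) : ℂ :=
  2 * (Θf ![0,0] τ ^ 2 * Θf ![1,0] τ ^ 2 + Θf ![0,1] τ ^ 2 * Θf ![1,1] τ ^ 2)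
noncomputable def P3 (τ : Mat2) : ℂ :=
  2 * (Θf ![0,0] τ ^ 2 * Θf ![1,1] τ ^ 2 + Θf ![0,1] τ ^ 2 * Θf ![1,0] τ ^ 2)
noncomputable def P4 (τ : Mat2) : ℂ :=
  4 * (Θf ![0,0] τ * Θf ![0,1] τ * Θf ![1,0] τ * Θf ![1,1] τ)

/-- The vector `(P₀,…,P₄)`. -/
noncomputable def Pv : Fin 5 → Mat2 → ℂ := ![P0, P1, P2, P3, P4]

open MvPolynomial in
/-- The Igusa quartic as a polynomial in `x₀,…,x₄`. -/
noncomputable def I4poly : MvPolynomial (Fin 5) ℂ :=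
  X 4 ^ 4 + X 4 ^ 2 * X 0 ^ 2 - X 4 ^ 2 * X 1 ^ 2 - X 4 ^ 2 * X 2 ^ 2 - X 4 ^ 2 * X 3 ^ 2
    + X 1 ^ 2 * X 2 ^ 2 + X 1 ^ 2 * X 3 ^ 2 + X 2 ^ 2 * X 3 ^ 2
    - 2 * (X 0 * X 1 * X 2 * X 3)

/-- The signature `⟨κ|λ⟩ = exp(πi(a_κ·b_λ − b_κ·a_λ))`. -/
noncomputable def sig (κ lam : Char) : ℂ :=
  Complex.exp ((Real.pi : ℂ) * Complex.I *
    (((∑ i, κ.1 i * lam.2 i : ℤ) : ℂ) - ((∑ i, κ.2 i * lam.1 i : ℤ) : ℂ)))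

/-- Componentwise mod-2 sum of characteristics. -/
def addChar (κ lam : Char) : Char :=
  (fun i => (κ.1 i + lam.1 i) % 2, fun i => (κ.2 i + lam.2 i) % 2)

/-- For each even characteristic `δ_d`, the ordering `(k₁,…,k₆)` of `{1,…,6}` (0-indexed) whose
first three entries form the triad of odd characteristics with `δ_d = ν_{k₁}+ν_{k₂}+ν_{k₃}`
and whose last three are the complementary indices. -/
def triad : Fin 10 → Fin 6 → Fin 6 :=
  ![![0,3,5,1,2,4], ![0,1,5,2,3,4], ![0,1,4,2,3,5], ![0,3,4,1,2,5], ![0,1,3,2,4,5],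
    ![0,4,5,1,2,3], ![0,1,2,3,4,5], ![0,2,3,1,4,5], ![0,2,5,1,3,4], ![0,2,4,1,3,5]]

/-- D'Hoker–Phong's `Ξ₆[δ]`. -/
noncomputable def Xi6 (d : Fin 10) (τ : Mat2) : ℂ :=
  ∑ i : Fin 3, ∑ j : Fin 3,
    if i < j then
      sig (νodd (triad d (Fin.castLE (by norm_num) i))) (νodd (triad d (Fin.castLE (by norm_num) j))) *
        ∏ m : Fin 3,
          theta (addChar (addChar (νodd (triad d (Fin.castLE (by norm_num) i)))
              (νodd (triad d (Fin.castLE (by norm_num) j))))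
            (νodd (triad d (⟨m.1 + 3, by omega⟩ : Fin 6)))) τ ^ 4
    else 0

/-- The formal derivative `∂I₄/∂θ⁴[δ]` of the Igusa quartic with respect to the ten fourth
powers of the even theta constants, regarded as independent variables. -/
noncomputable def Dd (d : Fin 10) (τ : Mat2) : ℂ :=
  (1 / 48 : ℂ) *
    (theta (δev d) τ ^ 4 * (∑ d' : Fin 10, theta (δev d') τ ^ 8) - 4 * theta (δev d) τ ^ 12)

/-- `f_δ = 2Ξ₆[δ] − ∂I₄/∂θ⁴[δ]`. -/
noncomputable def fδ (d : Fin 10) (τ : Mat2) : ℂ := 2 * Xi6 d τ - Dd d τ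

/-- `Ψ₆`, the weight-6 modular form. -/
noncomputable def Ψ6 (τ : Mat2) : ℂ :=
  P0 τ ^ 3 - 9 * P0 τ * (P1 τ ^ 2 + P2 τ ^ 2 + P3 τ ^ 2 - 4 * P4 τ ^ 2)
    + 54 * (P1 τ * P2 τ * P3 τ)

/-- `Ψ₁₀`, the weight-10 modular form. -/
noncomputable def Ψ10 (τ : Mat2) : ℂ := ∏ d : Fin 10, theta (δev d) τ ^ 2

/-- A characteristic is even when `a·b` is even. -/
def IsEvenChar (κ : Char) : Prop := (∑ i, κ.1 i * κ.2 i) % 2 = 0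

/-- A characteristic is odd when `a·b` is odd. -/
def IsOddChar (κ : Char) : Prop := (∑ i, κ.1 i * κ.2 i) % 2 = 1


/-- General term of the genus-2 theta series in coordinates. -/
noncomputable def gt (x y z : ℂ) (a1 a2 b1 b2 : ℤ) (n : ℤ × ℤ) : ℂ :=
  Complex.exp ((Real.pi : ℂ) * Complex.I *
    (((n.1 : ℂ) + a1 / 2) ^ 2 * x + 2 * ((n.1 : ℂ) + a1 / 2) * ((n.2 : ℂ) + a2 / 2) * y
      + ((n.2 : ℂ) + a2 / 2) ^ 2 * z
      + (((n.1 : ℂ) + a1 / 2) * b1 + ((n.2 : ℂ) + a2 / 2) * b2)))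

/-- The theta series in coordinates. -/
noncomputable def th (x y z : ℂ) (a1 a2 b1 b2 : ℤ) : ℂ := ∑' n : ℤ × ℤ, gt x y z a1 a2 b1 b2 n

lemma theta_eq_th (a1 a2 b1 b2 : ℤ) (τ : Mat2) (h : τ 1 0 = τ 0 1) :
    theta (![a1, a2], ![b1, b2]) τ = th (τ 0 0) (τ 0 1) (τ 1 1) a1 a2 b1 b2 := by
  unfold theta th
  rw [← (finTwoArrowEquiv ℤ).tsum_eq]
  refine tsum_congr fun n => ?_
  unfold gt
  congr 1
  simp [Fin.sum_univ_two, h]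
  ring

lemma summable_one (c : ℝ) (hc : 0 < c) (a : ℤ) :
    Summable (fun n : ℤ => Real.exp (-Real.pi * c * ((n : ℝ) + a / 2) ^ 2)) := by
  have h := ((summable_jacobiTheta₂_term_iff (((c * a / 2 : ℝ) : ℂ) * Complex.I)
    ((c : ℂ) * Complex.I)).2 (by simpa using hc)).norm.mul_left
      (Real.exp (-Real.pi * c * ((a : ℝ) / 2) ^ 2))
  refine h.congr fun n => ?_
  rw [norm_jacobiTheta₂_term, ← Real.exp_add]
  congr 1
  simp only [Complex.mul_I_im, Complex.ofReal_re]
  ring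

lemma quad_bound (p q r : ℝ) (hp : 0 < p) (hd : 0 < p * r - q ^ 2) :
    ∃ c : ℝ, 0 < c ∧ ∀ u v : ℝ, c * u ^ 2 + c * v ^ 2 ≤ u ^ 2 * p + 2 * u * v * q + v ^ 2 * r := by
  have hr : 0 < r := by
    by_contra hr
    nlinarith [sq_nonneg q]
  have hs : 0 < p + r := by positivity
  obtain ⟨c, hc⟩ : ∃ c, c = (p * r - q ^ 2) / (p + r) := ⟨_, rfl⟩
  have hcs : c * (p + r) = p * r - q ^ 2 := by rw [hc]; field_simp
  have hc0 : 0 < c := by rw [hc]; positivity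
  refine ⟨c, hc0, fun u v => ?_⟩
  have hpc : 0 < p - c := by
    by_contra hh
    nlinarith [sq_nonneg q]
  have key : 0 ≤ (p - c) * (u ^ 2 * p + 2 * u * v * q + v ^ 2 * r - (c * u ^ 2 + c * v ^ 2)) := by
    have : (p - c) * (u ^ 2 * p + 2 * u * v * q + v ^ 2 * r - (c * u ^ 2 + c * v ^ 2))
        = ((p - c) * u + q * v) ^ 2 + (c * v) ^ 2 := by
      linear_combination (-v ^ 2) * hcs
    rw [this]
    positivity
  have := nonneg_of_mul_nonneg_right key hpc
  linarith

lemma gt_summable (x y z : ℂ) (hp : 0 < x.im) (hd : 0 < x.im * z.im - y.im ^ 2)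
    (a1 a2 b1 b2 : ℤ) : Summable (fun n => ‖gt x y z a1 a2 b1 b2 n‖) := by
  obtain ⟨c, hc, hb⟩ := quad_bound _ _ _ hp hd
  refine Summable.of_nonneg_of_le (fun _ => norm_nonneg _) (fun n => ?_)
    ((summable_one c hc a1).mul_of_nonneg (summable_one c hc a2)
      (fun _ => (Real.exp_pos _).le) (fun _ => (Real.exp_pos _).le))
  rw [← Real.exp_add, gt, Complex.norm_exp, Real.exp_le_exp]
  have h := hb ((n.1 : ℝ) + a1 / 2) ((n.2 : ℝ) + a2 / 2)
  have e : ((Real.pi : ℂ) * Complex.I *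
    (((n.1 : ℂ) + a1 / 2) ^ 2 * x + 2 * ((n.1 : ℂ) + a1 / 2) * ((n.2 : ℂ) + a2 / 2) * y
      + ((n.2 : ℂ) + a2 / 2) ^ 2 * z
      + (((n.1 : ℂ) + a1 / 2) * b1 + ((n.2 : ℂ) + a2 / 2) * b2)))
      = ((Real.pi * ((n.1 : ℝ) + a1 / 2) ^ 2 : ℝ) : ℂ) * x * Complex.I
        + ((Real.pi * (2 * ((n.1 : ℝ) + a1 / 2) * ((n.2 : ℝ) + a2 / 2)) : ℝ) : ℂ) * y * Complex.I
        + ((Real.pi * ((n.2 : ℝ) + a2 / 2) ^ 2 : ℝ) : ℂ) * z * Complex.I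
        + ((Real.pi * (((n.1 : ℝ) + a1 / 2) * b1 + ((n.2 : ℝ) + a2 / 2) * b2) : ℝ) : ℂ)
          * Complex.I := by
    push_cast
    ring
  rw [e]
  simp only [Complex.add_re, Complex.mul_I_re, Complex.im_ofReal_mul, Complex.ofReal_im]
  have := mul_le_mul_of_nonneg_left h Real.pi_pos.le
  nlinarith [this]

/-- The reindexing `(ε, (p, q)) ↦ (p + q + ε, p - q)`. -/
def reidx (w : (Fin 2 × Fin 2) × ((ℤ × ℤ) × (ℤ × ℤ))) : (ℤ × ℤ) × (ℤ × ℤ) :=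
  ((w.2.1.1 + w.2.2.1 + (w.1.1.val : ℤ), w.2.1.2 + w.2.2.2 + (w.1.2.val : ℤ)),
    (w.2.1.1 - w.2.2.1, w.2.1.2 - w.2.2.2))

lemma reidx_bij : Function.Bijective reidx := by
  constructor
  · rintro ⟨⟨e, f⟩, ⟨p1, p2⟩, ⟨q1, q2⟩⟩ ⟨⟨e', f'⟩, ⟨p1', p2'⟩, ⟨q1', q2'⟩⟩ h
    simp only [reidx, Prod.mk.injEq] at h ⊢
    simp only [Fin.ext_iff]
    omega
  · rintro ⟨⟨m1, m2⟩, ⟨n1, n2⟩⟩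
    refine ⟨((⟨((m1 - n1) % 2).toNat, by omega⟩, ⟨((m2 - n2) % 2).toNat, by omega⟩),
      ((n1 + (m1 - n1) / 2, n2 + (m2 - n2) / 2), ((m1 - n1) / 2, (m2 - n2) / 2))), ?_⟩
    simp only [reidx, Prod.mk.injEq]
    omega

lemma gt_mul (x y z : ℂ) (a1 a2 b1 b2 : ℤ) (e : Fin 2 × Fin 2) (p q : ℤ × ℤ) :
    gt x y z a1 a2 b1 b2 (reidx (e, (p, q))).1 * gt x y z a1 a2 b1 b2 (reidx (e, (p, q))).2
    = Complex.exp ((Real.pi : ℂ) * Complex.I *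
        ((((e.1.val : ℤ) + a1) * b1 + ((e.2.val : ℤ) + a2) * b2 : ℤ) : ℂ)) *
      (gt (2 * x) (2 * y) (2 * z) ((e.1.val : ℤ) + a1) ((e.2.val : ℤ) + a2) 0 0 p *
        gt (2 * x) (2 * y) (2 * z) (e.1.val : ℤ) (e.2.val : ℤ) 0 0 q) := by
  have key : Complex.exp ((Real.pi : ℂ) * Complex.I *
        ((((e.1.val : ℤ) + a1) * b1 + ((e.2.val : ℤ) + a2) * b2 : ℤ) : ℂ))
      = Complex.exp ((Real.pi : ℂ) * Complex.I *
        ((((e.1.val : ℤ) + a1) * b1 + ((e.2.val : ℤ) + a2) * b2 : ℤ) : ℂ)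
        + ((p.1 * b1 + p.2 * b2 : ℤ) : ℂ) * (2 * Real.pi * Complex.I)) := by
    rw [Complex.exp_add, Complex.exp_int_mul_two_pi_mul_I, mul_one]
  rw [key]
  simp only [gt, ← Complex.exp_add, reidx]
  congr 1
  push_cast
  ring

lemma th_sq (x y z : ℂ) (hp : 0 < x.im) (hd : 0 < x.im * z.im - y.im ^ 2) (a1 a2 b1 b2 : ℤ) :
    th x y z a1 a2 b1 b2 ^ 2 = ∑ e : Fin 2 × Fin 2,
      Complex.exp ((Real.pi : ℂ) * Complex.I *
        ((((e.1.val : ℤ) + a1) * b1 + ((e.2.val : ℤ) + a2) * b2 : ℤ) : ℂ)) *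
      (th (2 * x) (2 * y) (2 * z) ((e.1.val : ℤ) + a1) ((e.2.val : ℤ) + a2) 0 0 *
        th (2 * x) (2 * y) (2 * z) (e.1.val : ℤ) (e.2.val : ℤ) 0 0) := by
  have hs := gt_summable x y z hp hd a1 a2 b1 b2
  have him : ∀ w : ℂ, (2 * w).im = 2 * w.im := fun w => by simp
  have hs2 := gt_summable (2 * x) (2 * y) (2 * z) (by rw [him]; linarith)
    (by simp only [him]; nlinarith)
  have hsum := summable_mul_of_summable_norm hs hs
  rw [sq, th, tsum_mul_tsum_of_summable_norm hs hs]
  let E := Equiv.ofBijective reidx reidx_bij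
  rw [← E.tsum_eq]
  have hsum2 := (E.summable_iff).2 hsum
  refine (Summable.tsum_prod hsum2).trans ?_
  rw [tsum_fintype]
  refine Finset.sum_congr rfl fun e _ => ?_
  rw [th, th, tsum_mul_tsum_of_summable_norm (hs2 _ _ _ _) (hs2 _ _ _ _), ← tsum_mul_left]
  refine tsum_congr fun w => ?_
  exact gt_mul x y z a1 a2 b1 b2 e w.1 w.2

lemma th_shift1 (x y z : ℂ) (a2 : ℤ) : th x y z 2 a2 0 0 = th x y z 0 a2 0 0 := by
  unfold th
  rw [← (Equiv.addRight ((1, 0) : ℤ × ℤ)).tsum_eq (gt x y z 0 a2 0 0)]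
  refine tsum_congr fun n => ?_
  simp [gt]

lemma th_shift2 (x y z : ℂ) (a1 : ℤ) : th x y z a1 2 0 0 = th x y z a1 0 0 0 := by
  unfold th
  rw [← (Equiv.addRight ((0, 1) : ℤ × ℤ)).tsum_eq (gt x y z a1 0 0 0)]
  refine tsum_congr fun n => ?_
  simp [gt]

lemma exp_two : Complex.exp ((Real.pi : ℂ) * Complex.I * 2) = 1 := by
  rw [← Complex.exp_two_pi_mul_I]; ring_nf

lemma exp_three : Complex.exp ((Real.pi : ℂ) * Complex.I * 3) = -1 := by
  rw [show (Real.pi : ℂ) * Complex.I * 3 = Real.pi * Complex.I * 2 + Real.pi * Complex.I by ring,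
    Complex.exp_add, exp_two, Complex.exp_pi_mul_I]; ring

lemma exp_four : Complex.exp ((Real.pi : ℂ) * Complex.I * 4) = 1 := by
  rw [show (Real.pi : ℂ) * Complex.I * 4 = Real.pi * Complex.I * 2 + Real.pi * Complex.I * 2
    by ring, Complex.exp_add, exp_two]; ring

/-- expansion of the ten `θ⁴[δ]` on the basis `P₀,…,P₄`. -/
theorem statement0 : ∀ τ ∈ SiegelH2,
    theta (δev 0) τ ^ 4 = P0 τ + P1 τ + P2 τ + P3 τ ∧
    theta (δev 1) τ ^ 4 = P0 τ - P1 τ + P2 τ - P3 τ ∧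
    theta (δev 2) τ ^ 4 = P0 τ + P1 τ - P2 τ - P3 τ ∧
    theta (δev 3) τ ^ 4 = P0 τ - P1 τ - P2 τ + P3 τ ∧
    theta (δev 4) τ ^ 4 = 2 * P1 τ + 2 * P4 τ ∧
    theta (δev 5) τ ^ 4 = 2 * P1 τ - 2 * P4 τ ∧
    theta (δev 6) τ ^ 4 = 2 * P2 τ + 2 * P4 τ ∧
    theta (δev 7) τ ^ 4 = 2 * P2 τ - 2 * P4 τ ∧
    theta (δev 8) τ ^ 4 = 2 * P3 τ + 2 * P4 τ ∧
    theta (δev 9) τ ^ 4 = 2 * P3 τ - 2 * P4 τ := by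
  rintro τ ⟨hsym, hpos⟩
  have h10 : τ 1 0 = τ 0 1 := by
    have := congrFun (congrFun hsym 0) 1
    simpa using this
  have hp : 0 < (τ 0 0).im := by simpa using hpos.diag_pos (i := 0)
  have hd : 0 < (τ 0 0).im * (τ 1 1).im - (τ 0 1).im ^ 2 := by
    have := hpos.det_pos
    rw [Matrix.det_fin_two] at this
    simp only [Matrix.map_apply, h10] at this
    nlinarith [this]
  have hT : ∀ a1 a2 : ℤ, Θf ![a1, a2] τ
      = th (2 * τ 0 0) (2 * τ 0 1) (2 * τ 1 1) a1 a2 0 0 := fun a1 a2 => by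
    rw [Θf, theta_eq_th _ _ _ _ _ (by simp [h10])]
    simp
  have hsq := th_sq _ _ _ hp hd
  have pw : ∀ w : ℂ, w ^ 4 = (w ^ 2) ^ 2 := fun w => by ring
  simp only [P0, P1, P2, P3, P4, hT]
  refine ⟨?_, ?_, ?_, ?_, ?_, ?_, ?_, ?_, ?_, ?_⟩ <;>
  · simp only [δev, Matrix.cons_val]
    rw [theta_eq_th _ _ _ _ _ h10, pw, hsq]
    simp [Fintype.sum_prod_type, Fin.sum_univ_two, th_shift1, th_shift2, one_add_one_eq_two,
      exp_two, Complex.exp_pi_mul_I]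
    ring_nf
    try simp only [exp_three, exp_four]
    try ring_nf

end TwoLoop
end

section
/- For every τ in the genus-2 Siegel upper half space H₂, the point (P₀(τ), P₁(τ), P₂(τ), P₃(τ), P₄(τ)) lies on the Igusa quartic, i.e. I₄(P₀(τ), P₁(τ), P₂(τ), P₃(τ), P₄(τ)) = 0. -/
open scoped BigOperators

namespace TwoLoop

/-- `(P₀(τ),…,P₄(τ))` lies on the Igusa quartic. -/
theorem statement2 : ∀ τ ∈ SiegelH2,
    MvPolynomial.eval (fun i => Pv i τ) I4poly = 0 := by
  intro τ _
  simp only [I4poly, map_add, map_sub, map_mul, map_pow, MvPolynomial.eval_X, map_ofNat]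
  change P4 τ ^ 4 + P4 τ ^ 2 * P0 τ ^ 2 - P4 τ ^ 2 * P1 τ ^ 2 - P4 τ ^ 2 * P2 τ ^ 2
    - P4 τ ^ 2 * P3 τ ^ 2 + P1 τ ^ 2 * P2 τ ^ 2 + P1 τ ^ 2 * P3 τ ^ 2 + P2 τ ^ 2 * P3 τ ^ 2
    - 2 * (P0 τ * P1 τ * P2 τ * P3 τ) = 0
  simp only [P0, P1, P2, P3, P4]
  ring

end TwoLoop
end

section
/- For every τ in the genus-2 Siegel upper half space H₂, the even theta constants satisfy the identity (Σ_δ θ⁸[δ](τ))² = 4 Σ_δ θ¹⁶[δ](τ), where δ ranges over the ten even characteristics. -/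
open scoped BigOperators

namespace TwoLoop

/-- The Gaussian term `exp(πi (A k² + 2 B k l + C l²)/4)`. -/
noncomputable def gterm (A B C : ℂ) (k : ℤ × ℤ) : ℂ :=
  Complex.exp ((Real.pi : ℂ) * Complex.I / 4 *
    (A * (k.1 : ℂ) ^ 2 + 2 * B * k.1 * k.2 + C * (k.2 : ℂ) ^ 2))

theorem summable_gauss (c : ℝ) (hc : 0 < c) : Summable fun k : ℤ => Real.exp (-c * (k : ℝ) ^ 2) := by
  have h := (summable_jacobiTheta₂_term_iff 0 (Complex.I * ((c / Real.pi : ℝ) : ℂ))).2 (by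
    simp only [Complex.mul_im, Complex.I_re, Complex.I_im, Complex.ofReal_re, Complex.ofReal_im]
    have := Real.pi_pos
    simp only [zero_mul, one_mul, zero_add]
    positivity)
  refine h.norm.congr fun k => ?_
  rw [norm_jacobiTheta₂_term]
  congr 1
  have := Real.pi_pos.ne'
  simp
  field_simp

theorem quad_bound_s3 (a b d x y : ℝ) (ha : 0 < a) (hd : 0 < d) (hdet : 0 < a * d - b ^ 2) :
    (a * d - b ^ 2) / (a + d) * (x ^ 2 + y ^ 2) ≤ a * x ^ 2 + 2 * b * x * y + d * y ^ 2 := by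
  rw [div_mul_eq_mul_div, div_le_iff₀ (by positivity)]
  nlinarith [sq_nonneg (a * x + b * y), sq_nonneg (b * x + d * y)]

theorem summable_gterm (A B C : ℂ) (ha : 0 < A.im) (hd : 0 < C.im)
    (hdet : 0 < A.im * C.im - B.im ^ 2) : Summable fun k : ℤ × ℤ => ‖gterm A B C k‖ := by
  set c : ℝ := Real.pi / 4 * ((A.im * C.im - B.im ^ 2) / (A.im + C.im)) with hc
  have hcpos : 0 < c := by have := Real.pi_pos; positivity
  have h := (summable_gauss c hcpos).mul_of_nonneg (summable_gauss c hcpos)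
    (fun _ => (Real.exp_pos _).le) (fun _ => (Real.exp_pos _).le)
  refine Summable.of_nonneg_of_le (fun _ => norm_nonneg _) (fun k => ?_) h
  rw [gterm, Complex.norm_exp, ← Real.exp_add]
  apply Real.exp_le_exp.2
  have hb := quad_bound_s3 A.im B.im C.im k.1 k.2 ha hd hdet
  have e : ((Real.pi : ℂ) * Complex.I / 4 *
    (A * (k.1 : ℂ) ^ 2 + 2 * B * k.1 * k.2 + C * (k.2 : ℂ) ^ 2)).re =
    - (Real.pi / 4 * (A.im * (k.1 : ℝ) ^ 2 + 2 * B.im * k.1 * k.2 + C.im * (k.2 : ℝ) ^ 2)) := by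
    have : ((Real.pi : ℂ) * Complex.I / 4 *
      (A * (k.1 : ℂ) ^ 2 + 2 * B * k.1 * k.2 + C * (k.2 : ℂ) ^ 2)) =
      ((Real.pi / 4 : ℝ) : ℂ) * (Complex.I * (A * ((k.1 ^ 2 : ℤ) : ℝ) + B * ((2 * k.1 * k.2 : ℤ) : ℝ)
        + C * ((k.2 ^ 2 : ℤ) : ℝ))) := by
      push_cast; ring
    rw [this, Complex.re_ofReal_mul, Complex.I_mul_re, Complex.add_im, Complex.add_im,
      Complex.im_mul_ofReal, Complex.im_mul_ofReal, Complex.im_mul_ofReal]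
    push_cast; ring
  rw [e]
  have := mul_le_mul_of_nonneg_left hb (by positivity : 0 ≤ Real.pi / 4)
  rw [hc]
  linarith

/-- Theta series with general integer characteristic. -/
noncomputable def thetaT (A B C : ℂ) (a b : ℤ × ℤ) : ℂ :=
  ∑' n : ℤ × ℤ, gterm A B C (2 * n.1 + a.1, 2 * n.2 + a.2) *
    Complex.exp ((Real.pi : ℂ) * Complex.I * (((n.1 : ℂ) + a.1 / 2) * b.1 + ((n.2 : ℂ) + a.2 / 2) * b.2))

/-- Second order theta series. -/
noncomputable def thetaS (A B C : ℂ) (a : ℤ × ℤ) : ℂ :=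
  ∑' n : ℤ × ℤ, gterm (2 * A) (2 * B) (2 * C) (2 * n.1 + a.1, 2 * n.2 + a.2)

theorem thetaS_shift (A B C : ℂ) (a c : ℤ × ℤ) :
    thetaS A B C (a.1 + 2 * c.1, a.2 + 2 * c.2) = thetaS A B C a := by
  unfold thetaS
  rw [← (Equiv.addRight c).tsum_eq (fun n : ℤ × ℤ =>
    gterm (2 * A) (2 * B) (2 * C) (2 * n.1 + a.1, 2 * n.2 + a.2))]
  refine tsum_congr fun n => ?_
  congr 2 <;> simp <;> ring

/-- Reindexing of pairs of lattice points. -/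
def pairEquiv (a : ℤ × ℤ) :
    (Fin 2 × Fin 2) × ((ℤ × ℤ) × (ℤ × ℤ)) ≃ (ℤ × ℤ) × (ℤ × ℤ) where
  toFun x := ((x.2.1.1 + x.2.2.1 + x.1.1.val, x.2.1.2 + x.2.2.2 + x.1.2.val),
    (x.2.1.1 - x.2.2.1 - a.1, x.2.1.2 - x.2.2.2 - a.2))
  invFun y := ((⟨((y.1.1 + y.2.1 + a.1) % 2).toNat, by omega⟩,
      ⟨((y.1.2 + y.2.2 + a.2) % 2).toNat, by omega⟩),
    (((y.1.1 + y.2.1 + a.1) / 2, (y.1.2 + y.2.2 + a.2) / 2),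
     (y.1.1 - (y.1.1 + y.2.1 + a.1) % 2 - (y.1.1 + y.2.1 + a.1) / 2,
      y.1.2 - (y.1.2 + y.2.2 + a.2) % 2 - (y.1.2 + y.2.2 + a.2) / 2)))
  left_inv := by
    rintro ⟨⟨⟨e, he⟩, ⟨f, hf⟩⟩, ⟨p, p'⟩, ⟨q, q'⟩⟩
    simp only [Prod.mk.injEq, Fin.mk.injEq]
    refine ⟨⟨?_, ?_⟩, ⟨?_, ?_⟩, ?_, ?_⟩ <;> omega
  right_inv := by
    rintro ⟨⟨n, n'⟩, ⟨m, m'⟩⟩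
    simp only [Prod.mk.injEq]
    refine ⟨⟨?_, ?_⟩, ?_, ?_⟩ <;> omega

theorem norm_exp_real (x : ℝ) : ‖Complex.exp ((Real.pi : ℂ) * Complex.I * x)‖ = 1 := by
  rw [show (Real.pi : ℂ) * Complex.I * x = ((Real.pi * x : ℝ) : ℂ) * Complex.I by push_cast; ring]
  exact Complex.norm_exp_ofReal_mul_I _

theorem inj_affine (a : ℤ × ℤ) :
    Function.Injective fun n : ℤ × ℤ => ((2 * n.1 + a.1, 2 * n.2 + a.2) : ℤ × ℤ) := by
  rintro ⟨n, n'⟩ ⟨m, m'⟩ h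
  simp only [Prod.mk.injEq] at h ⊢
  omega

theorem exp_pi_even (k : ℤ) : Complex.exp ((Real.pi : ℂ) * Complex.I * (2 * k : ℂ)) = 1 := by
  rw [show (Real.pi : ℂ) * Complex.I * (2 * k : ℂ) = k * (2 * Real.pi * Complex.I) by ring]
  exact Complex.exp_int_mul_two_pi_mul_I k

theorem pair_term (A B C : ℂ) (a b : ℤ × ℤ) (x : (Fin 2 × Fin 2) × ((ℤ × ℤ) × (ℤ × ℤ))) :
    (gterm A B C (2 * (pairEquiv a x).1.1 + a.1, 2 * (pairEquiv a x).1.2 + a.2) *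
      Complex.exp ((Real.pi : ℂ) * Complex.I * ((((pairEquiv a x).1.1 : ℂ) + a.1 / 2) * b.1
        + (((pairEquiv a x).1.2 : ℂ) + a.2 / 2) * b.2))) *
    (gterm A B C (2 * (pairEquiv a x).2.1 + a.1, 2 * (pairEquiv a x).2.2 + a.2) *
      Complex.exp ((Real.pi : ℂ) * Complex.I * ((((pairEquiv a x).2.1 : ℂ) + a.1 / 2) * b.1
        + (((pairEquiv a x).2.2 : ℂ) + a.2 / 2) * b.2))) =
    Complex.exp ((Real.pi : ℂ) * Complex.I * ((x.1.1.val : ℂ) * b.1 + (x.1.2.val : ℂ) * b.2)) *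
      (gterm (2 * A) (2 * B) (2 * C) (2 * x.2.1.1 + x.1.1.val, 2 * x.2.1.2 + x.1.2.val) *
       gterm (2 * A) (2 * B) (2 * C)
        (2 * x.2.2.1 + (x.1.1.val + a.1), 2 * x.2.2.2 + (x.1.2.val + a.2))) := by
  obtain ⟨⟨e, f⟩, ⟨p, p'⟩, ⟨q, q'⟩⟩ := x
  have h := exp_pi_even (p * b.1 + p' * b.2)
  rw [← one_mul (Complex.exp ((Real.pi : ℂ) * Complex.I * (((e.val : ℂ)) * b.1 + _))), ← h]
  simp only [gterm, pairEquiv, Equiv.coe_fn_mk, ← Complex.exp_add]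
  congr 1
  push_cast
  ring

theorem thetaT_sq (A B C : ℂ) (ha : 0 < A.im) (hd : 0 < C.im)
    (hdet : 0 < A.im * C.im - B.im ^ 2) (a b : ℤ × ℤ) :
    thetaT A B C a b ^ 2 = ∑ e : Fin 2 × Fin 2,
      Complex.exp ((Real.pi : ℂ) * Complex.I * ((e.1.val : ℂ) * b.1 + (e.2.val : ℂ) * b.2)) *
        (thetaS A B C (e.1.val, e.2.val) * thetaS A B C (e.1.val + a.1, e.2.val + a.2)) := by
  have h1 : Summable fun n : ℤ × ℤ => ‖gterm A B C (2 * n.1 + a.1, 2 * n.2 + a.2) *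
    Complex.exp ((Real.pi : ℂ) * Complex.I *
      (((n.1 : ℂ) + a.1 / 2) * b.1 + ((n.2 : ℂ) + a.2 / 2) * b.2))‖ := by
    refine ((summable_gterm A B C ha hd hdet).comp_injective (inj_affine a)).congr fun n => ?_
    have := norm_exp_real (((n.1 : ℝ) + a.1 / 2) * b.1 + ((n.2 : ℝ) + a.2 / 2) * b.2)
    push_cast at this
    rw [norm_mul, this, mul_one]
    rfl
  have h2 : ∀ c : ℤ × ℤ, Summable fun n : ℤ × ℤ =>
      ‖gterm (2 * A) (2 * B) (2 * C) (2 * n.1 + c.1, 2 * n.2 + c.2)‖ := fun c =>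
    (summable_gterm (2 * A) (2 * B) (2 * C) (by simpa using ha) (by simpa using hd)
      (by simp; nlinarith)).comp_injective (inj_affine c)
  rw [sq]
  unfold thetaT
  rw [tsum_mul_tsum_of_summable_norm h1 h1]
  have h3 := (summable_mul_of_summable_norm h1 h1)
  rw [← (pairEquiv a).tsum_eq]
  have h4 := (pairEquiv a).summable_iff.2 h3
  have h5 := h4.tsum_prod
  simp only [Function.comp_def] at h5
  rw [h5, tsum_fintype]
  refine Finset.sum_congr rfl fun e _ => ?_
  simp only [pair_term]
  rw [tsum_mul_left]
  unfold thetaS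
  rw [tsum_mul_tsum_of_summable_norm (h2 (e.1.val, e.2.val)) (h2 (e.1.val + a.1, e.2.val + a.2))]

theorem theta_eq (τ : Mat2) (hτ : τ.transpose = τ) (a0 a1 b0 b1 : ℤ) :
    theta (![a0, a1], ![b0, b1]) τ = thetaT (τ 0 0) (τ 0 1) (τ 1 1) (a0, a1) (b0, b1) := by
  have hs : τ 1 0 = τ 0 1 := congrFun (congrFun hτ 0) 1
  unfold theta thetaT
  rw [← (finTwoArrowEquiv ℤ).symm.tsum_eq]
  refine tsum_congr fun n => ?_
  simp only [gterm, ← Complex.exp_add]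
  congr 1
  simp [Fin.sum_univ_two, hs]
  ring

theorem exp_pi_one : Complex.exp ((Real.pi : ℂ) * Complex.I) = -1 := Complex.exp_pi_mul_I

/-- `(Σ_δ θ⁸[δ])² = 4 Σ_δ θ¹⁶[δ]` on `H₂`. -/
theorem statement3 : ∀ τ ∈ SiegelH2,
    (∑ d : Fin 10, theta (δev d) τ ^ 8) ^ 2 = 4 * ∑ d : Fin 10, theta (δev d) τ ^ 16 := by
  intro τ hτ
  obtain ⟨hs, hp⟩ := hτ
  have h00 : 0 < (τ 0 0).im := by simpa using hp.diag_pos (i := 0)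
  have h11 : 0 < (τ 1 1).im := by simpa using hp.diag_pos (i := 1)
  have hsym : τ 1 0 = τ 0 1 := congrFun (congrFun hs 0) 1
  have hdet : 0 < (τ 0 0).im * (τ 1 1).im - (τ 0 1).im ^ 2 := by
    have := hp.det_pos
    rw [Matrix.det_fin_two] at this
    simp only [Matrix.map_apply, hsym] at this
    nlinarith
  set A := τ 0 0
  set B := τ 0 1
  set C := τ 1 1
  obtain ⟨x, hx⟩ : ∃ x, x = thetaS A B C (0, 0) := ⟨_, rfl⟩
  obtain ⟨y, hy⟩ : ∃ x, x = thetaS A B C (0, 1) := ⟨_, rfl⟩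
  obtain ⟨z, hz⟩ : ∃ x, x = thetaS A B C (1, 0) := ⟨_, rfl⟩
  obtain ⟨w, hw⟩ : ∃ x, x = thetaS A B C (1, 1) := ⟨_, rfl⟩
  have s20 : thetaS A B C (2, 0) = x := by rw [hx]; exact thetaS_shift A B C (0, 0) (1, 0)
  have s02 : thetaS A B C (0, 2) = x := by rw [hx]; exact thetaS_shift A B C (0, 0) (0, 1)
  have s22 : thetaS A B C (2, 2) = x := by rw [hx]; exact thetaS_shift A B C (0, 0) (1, 1)
  have s21 : thetaS A B C (2, 1) = y := by rw [hy]; exact thetaS_shift A B C (0, 1) (1, 0)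
  have s12 : thetaS A B C (1, 2) = z := by rw [hz]; exact thetaS_shift A B C (1, 0) (0, 1)
  have e2 : Complex.exp ((Real.pi : ℂ) * Complex.I * (1 + 1)) = 1 := by
    refine Eq.trans ?_ (exp_pi_even 1)
    congr 1; push_cast; ring
  have key := fun a0 a1 b0 b1 : ℤ => (congrArg (fun t : ℂ => t ^ 2) (theta_eq τ hs a0 a1 b0 b1)).trans
    (thetaT_sq A B C h00 h11 hdet (a0, a1) (b0, b1))
  simp only [Fintype.sum_prod_type, Fin.sum_univ_two] at key
  have k1 := key 0 0 0 0
  have k2 := key 0 0 0 1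
  have k3 := key 0 0 1 0
  have k4 := key 0 0 1 1
  have k5 := key 0 1 0 0
  have k6 := key 0 1 1 0
  have k7 := key 1 0 0 0
  have k8 := key 1 0 0 1
  have k9 := key 1 1 0 0
  have k10 := key 1 1 1 1
  simp [s20, s02, s22, s21, s12, ← hx, ← hy, ← hz, ← hw, e2, exp_pi_one]
    at k1 k2 k3 k4 k5 k6 k7 k8 k9 k10
  have p8 : ∀ t : ℂ, t ^ 8 = (t ^ 2) ^ 4 := fun t => by ring
  have p16 : ∀ t : ℂ, t ^ 16 = (t ^ 2) ^ 8 := fun t => by ring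
  simp only [Fin.sum_univ_succ, Fin.sum_univ_zero, p8, p16]
  simp [δev, k1, k2, k3, k4, k5, k6, k7, k8, k9, k10]
  ring

end TwoLoop
end
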